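/- arXiv:1212.2260 — 4 statements merged into one kernel-verified Lean document; each statement's English description precedes it below -/
import Mathlib

section
/- Let H be a complex Hilbert space and T a densely defined symmetric linear operator on H with domain D. For any two complex numbers z and w with Im z > 0 and Im w > 0, the generalized deficiency spaces N_z = {x ∈ dom T† : T† x = z x} and N_w = {x ∈ dom T† : T† x = w x} are isomorphic as complex vector spaces (in particular they have the same dimension). The analogous statement holds for z, w in the open lower half-plane. -/
/-!
The space `N_z = ker (T† - z)` is the orthogonal complement `K_z` of the range of `T - z̄`.
If `Im z` and `Im w` have the same sign, the orthogonal projection of `H` onto `K_z` is injective on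
`K_w`. Indeed let `x ∈ K_w` be orthogonal to `K_z`, that is, in the closure of the range of `T - z̄`.
Since `‖(T - z̄) u‖ ≥ |Im z| ‖u‖`, there are limits `u = lim uₙ`, `v = lim T uₙ` with
`v - z̄ u = x`. Symmetry gives `Im ⟪u, v⟫ = 0`, so `-Im ⟪x, u⟫ = Im z ‖u‖²`, while `x ∈ K_w` gives
`(w̄ - z̄) ⟪x, u⟫ = ‖x‖²`. Together they say `Im w ‖x‖² = Im z (‖x‖² - |w - z|² ‖u‖²)`, and the
bracket is nonpositive by the Cauchy–Schwarz inequality, so `x = 0` (`eq_zero_of_mem_closure`).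

By symmetry in `z` and `w` there are linear injections both ways between `K_z` and `K_w`, so these
have equal algebraic rank (Schröder–Bernstein for cardinals) and are isomorphic.
-/

open scoped ComplexInnerProductSpace

namespace DeficiencySpaces

variable {H : Type*} [NormedAddCommGroup H] [InnerProductSpace ℂ H]

/-- The orthogonal complement of the range of `T - z̄`; it is the deficiency space `ker (T† - z)`
viewed as a subspace of `H` rather than of `T†.domain`. -/
noncomputable def defectSpace (T : H →ₗ.[ℂ] H) (z : ℂ) : Submodule ℂ H :=
  (LinearMap.range (T.toFun - (starRingEnd ℂ z) • T.domain.subtype))ᗮ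

lemma mem_defectSpace_iff {T : H →ₗ.[ℂ] H} {z : ℂ} {x : H} :
    x ∈ defectSpace T z ↔ ∀ u : T.domain, ⟪x, T u⟫ = ⟪z • x, (u : H)⟫ := by
  simp only [defectSpace, Submodule.mem_orthogonal', LinearMap.mem_range, forall_exists_index,
    forall_apply_eq_imp_iff, inner_smul_left]
  refine forall_congr' fun u => ?_
  rw [← sub_eq_zero (a := ⟪x, T u⟫), ← inner_smul_right, ← inner_sub_right]
  rfl

lemma nonempty_ker_equiv [CompleteSpace H] (T : H →ₗ.[ℂ] H) (hdense : Dense (T.domain : Set H))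
    (z : ℂ) : Nonempty
      ((LinearMap.ker (T.adjoint.toFun - z • T.adjoint.domain.subtype)) ≃ₗ[ℂ] defectSpace T z) := by
  refine ⟨(Submodule.equivMapOfInjective T.adjoint.domain.subtype
    (Submodule.injective_subtype _) _).trans (LinearEquiv.ofEq _ _ ?_)⟩
  ext x
  simp only [Submodule.mem_map, mem_defectSpace_iff]
  constructor
  · rintro ⟨y, hy, rfl⟩ u
    have hy' : T.adjoint y = z • (y : H) := sub_eq_zero.mp hy
    have := LinearPMap.adjoint_isFormalAdjoint hdense y u
    rw [hy'] at this
    exact this.symm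
  · intro h
    have hx : x ∈ T.adjoint.domain :=
      LinearPMap.mem_adjoint_domain_of_exists x ⟨z • x, fun u => (h u).symm⟩
    refine ⟨⟨x, hx⟩, ?_, rfl⟩
    exact sub_eq_zero.mpr
      (LinearPMap.adjoint_apply_eq hdense ⟨x, hx⟩ fun u => (h u).symm)

section Symmetric

variable {T : H →ₗ.[ℂ] H}
  (hsym : ∀ x y : T.domain, ⟪(T x : H), (y : H)⟫ = ⟪(x : H), (T y : H)⟫)
include hsym

lemma inner_map_self_im (u : T.domain) : (⟪(u : H), T u⟫).im = 0 := by
  have h := congrArg Complex.im (hsym u u)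
  rw [← inner_conj_symm, Complex.conj_im] at h
  linarith

/-- `T - z̄` is bounded below by `|Im z|`, because `Im ⟪u, (T - z̄) u⟫ = Im z ‖u‖²`. -/
lemma abs_im_mul_norm_le (z : ℂ) (u : T.domain) :
    |z.im| * ‖(u : H)‖ ≤ ‖T u - (starRingEnd ℂ z) • (u : H)‖ := by
  have h1 : (⟪(u : H), T u - (starRingEnd ℂ z) • (u : H)⟫).im = z.im * ‖(u : H)‖ ^ 2 := by
    rw [inner_sub_right, inner_smul_right, inner_self_eq_norm_sq_to_K, Complex.sub_im,
      inner_map_self_im hsym u]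
    simp only [Complex.coe_algebraMap, ← Complex.ofReal_pow, Complex.im_mul_ofReal,
      Complex.conj_im]
    ring
  have h2 : |z.im| * ‖(u : H)‖ ^ 2 ≤ ‖(u : H)‖ * ‖T u - (starRingEnd ℂ z) • (u : H)‖ := by
    calc |z.im| * ‖(u : H)‖ ^ 2 = |z.im * ‖(u : H)‖ ^ 2| := by
          rw [abs_mul, abs_of_nonneg (sq_nonneg ‖(u : H)‖)]
      _ ≤ _ := by
          rw [← h1]
          exact (Complex.abs_im_le_norm _).trans (norm_inner_le_norm _ _)
  rcases (norm_nonneg (u : H)).eq_or_lt with h0 | h0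
  · rw [← h0]; simp
  · exact le_of_mul_le_mul_left (by linarith) h0

open Filter Topology in
/-- A vector in the closure of the range of `T - z̄` is `v - z̄ u` for some `(u, v)` in the closure
of the graph of `T`. -/
lemma exists_limit [CompleteSpace H] {z : ℂ} (hz : z.im ≠ 0) {x : H}
    (hx : x ∈ closure
      (LinearMap.range (T.toFun - (starRingEnd ℂ z) • T.domain.subtype) : Set H)) :
    ∃ (a : ℕ → T.domain) (u : H), Tendsto (fun n => (a n : H)) atTop (𝓝 u) ∧
      Tendsto (fun n => T (a n)) atTop (𝓝 (x + (starRingEnd ℂ z) • u)) := by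
  obtain ⟨y, hy, hlim⟩ := mem_closure_iff_seq_limit.mp hx
  choose a ha using hy
  have ha' : ∀ n, T (a n) - (starRingEnd ℂ z) • (a n : H) = y n := ha
  have hpos : 0 < |z.im| := abs_pos.mpr hz
  have hc : CauchySeq fun n => (a n : H) := by
    rw [Metric.cauchySeq_iff]
    intro ε hε
    obtain ⟨N, hN⟩ := Metric.cauchySeq_iff.mp hlim.cauchySeq (|z.im| * ε) (by positivity)
    refine ⟨N, fun m hm n hn => ?_⟩
    have h1 := hN m hm n hn
    have h2 := abs_im_mul_norm_le hsym z (a m - a n)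
    have h3 : T (a m - a n) - (starRingEnd ℂ z) • ((a m - a n : T.domain) : H) = y m - y n := by
      rw [← ha', ← ha', LinearPMap.map_sub, Submodule.coe_sub, smul_sub]
      abel
    rw [h3, Submodule.coe_sub] at h2
    rw [dist_eq_norm] at h1 ⊢
    exact lt_of_mul_lt_mul_left (h2.trans_lt h1) hpos.le
  obtain ⟨u, hu⟩ := cauchySeq_tendsto_of_complete hc
  refine ⟨a, u, hu, ?_⟩
  refine (hlim.add (hu.const_smul (starRingEnd ℂ z))).congr fun n => ?_
  rw [← ha' n, sub_add_cancel]

open Filter Topology in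
/-- The orthogonal projection onto `defectSpace T z` has trivial kernel on `defectSpace T w` when
`z` and `w` lie in the same open half-plane. -/
lemma eq_zero_of_mem_closure [CompleteSpace H] {z w : ℂ} (hzw : 0 < z.im * w.im) {x : H}
    (hw : x ∈ defectSpace T w)
    (hx : x ∈ closure
      (LinearMap.range (T.toFun - (starRingEnd ℂ z) • T.domain.subtype) : Set H)) :
    x = 0 := by
  have hz : z.im ≠ 0 := fun h => by simp [h] at hzw
  obtain ⟨a, u, hu, hv⟩ := exists_limit hsym hz hx
  have e1 : ⟪x, x + (starRingEnd ℂ z) • u⟫ = ⟪w • x, u⟫ :=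
    tendsto_nhds_unique (tendsto_const_nhds.inner hv)
      ((tendsto_const_nhds.inner hu).congr fun n => (mem_defectSpace_iff.mp hw (a n)).symm)
  have e2 : (⟪u, x + (starRingEnd ℂ z) • u⟫).im = 0 :=
    tendsto_nhds_unique ((Complex.continuous_im.tendsto _).comp (hu.inner hv))
      (tendsto_const_nhds.congr fun n => (inner_map_self_im hsym (a n)).symm)
  have e3 : ‖⟪x, u⟫‖ ^ 2 ≤ (‖x‖ * ‖u‖) ^ 2 := by
    gcongr
    exact norm_inner_le_norm x u
  rw [inner_add_right, inner_smul_right, inner_smul_left, inner_self_eq_norm_sq_to_K] at e1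
  rw [inner_add_right, inner_smul_right, inner_self_eq_norm_sq_to_K, ← inner_conj_symm] at e2
  rw [← Complex.normSq_eq_norm_sq, Complex.normSq_apply, mul_pow] at e3
  generalize ⟪x, u⟫ = s at e1 e2 e3
  have e1r := congrArg Complex.re e1
  have e1i := congrArg Complex.im e1
  simp only [Complex.coe_algebraMap, ← Complex.ofReal_pow, Complex.add_re, Complex.add_im,
    Complex.mul_re, Complex.mul_im, Complex.conj_re, Complex.conj_im, Complex.ofReal_re,
    Complex.ofReal_im] at e1r e1i e2
  by_contra hne
  have hX : 0 < ‖x‖ ^ 2 := by have := norm_pos_iff.mpr hne; positivity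
  generalize ‖x‖ ^ 2 = X at *
  generalize ‖u‖ ^ 2 = U at *
  have r1 : (w.re - z.re) * s.re + (w.im - z.im) * s.im = X := by linarith
  have r2 : (w.re - z.re) * s.im - (w.im - z.im) * s.re = 0 := by linarith
  have r3 : s.im = -(z.im * U) := by linarith
  set D := (w.re - z.re) ^ 2 + (w.im - z.im) ^ 2 with hD
  have hD0 : 0 ≤ D := by positivity
  -- `|w - z|² |s|² = X²`, so Cauchy–Schwarz becomes `X ≤ |w - z|² U`.
  have f1 : D * (s.re * s.re + s.im * s.im) = X * X := by
    rw [hD]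
    linear_combination ((w.re - z.re) * s.re + (w.im - z.im) * s.im + X) * r1
      + ((w.re - z.re) * s.im - (w.im - z.im) * s.re) * r2
  have f2 : X ≤ D * U := by
    refine le_of_mul_le_mul_left ?_ hX
    rw [← f1]
    calc _ ≤ D * (X * U) := mul_le_mul_of_nonneg_left e3 hD0
      _ = _ := by ring
  have f3 : D * s.im = X * (w.im - z.im) := by
    rw [hD]
    linear_combination (w.im - z.im) * r1 + (w.re - z.re) * r2
  have f4 : z.im * w.im * X = z.im ^ 2 * (X - D * U) := by
    rw [r3] at f3
    linear_combination -z.im * f3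
  have f5 : z.im ^ 2 * (X - D * U) ≤ 0 :=
    mul_nonpos_of_nonneg_of_nonpos (sq_nonneg _) (by linarith)
  have f6 : 0 < z.im * w.im * X := mul_pos hzw hX
  linarith

lemma rank_defectSpace_le [CompleteSpace H] {z w : ℂ} (hzw : 0 < z.im * w.im) :
    Module.rank ℂ (defectSpace T w) ≤ Module.rank ℂ (defectSpace T z) := by
  have : CompleteSpace (defectSpace T z) := by
    unfold defectSpace; infer_instance
  let P : defectSpace T w →ₗ[ℂ] defectSpace T z :=
    (defectSpace T z).orthogonalProjectionOnto.toLinearMap ∘ₗ (defectSpace T w).subtype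
  refine LinearMap.rank_le_of_injective P ((injective_iff_map_eq_zero P).mpr fun x hx => ?_)
  have h1 : (x : H) ∈ (defectSpace T z)ᗮ :=
    Submodule.orthogonalProjectionOnto_eq_zero_iff.mp hx
  rw [defectSpace, Submodule.orthogonal_orthogonal_eq_closure] at h1
  exact Subtype.ext (eq_zero_of_mem_closure hsym hzw x.2 h1)

lemma nonempty_equiv [CompleteSpace H] (hdense : Dense (T.domain : Set H)) {z w : ℂ}
    (hzw : 0 < z.im * w.im) :
    Nonempty
        ((LinearMap.ker (T.adjoint.toFun - z • T.adjoint.domain.subtype)) ≃ₗ[ℂ]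
         (LinearMap.ker (T.adjoint.toFun - w • T.adjoint.domain.subtype))) := by
  obtain ⟨ez⟩ := nonempty_ker_equiv T hdense z
  obtain ⟨ew⟩ := nonempty_ker_equiv T hdense w
  obtain ⟨e⟩ := nonempty_linearEquiv_of_rank_eq (le_antisymm
    (rank_defectSpace_le hsym (z := w) (w := z) (by rwa [mul_comm]))
    (rank_defectSpace_le hsym hzw))
  exact ⟨(ez.trans e).trans ew.symm⟩

end Symmetric

end DeficiencySpaces

open scoped ComplexInnerProductSpace in
/-- For a densely defined symmetric operator `T` on a complex Hilbert
space, the generalized deficiency spaces `N_z = ker (T† - z)` are all isomorphic for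
`z` in the open upper half-plane, and likewise for the open lower half-plane. -/
theorem deficiency_spaces_isomorphic
    {H : Type*} [NormedAddCommGroup H] [InnerProductSpace ℂ H] [CompleteSpace H]
    (T : H →ₗ.[ℂ] H) (hdense : Dense (T.domain : Set H))
    (hsym : ∀ x y : T.domain, ⟪(T x : H), (y : H)⟫ = ⟪(x : H), (T y : H)⟫)
    (z w : ℂ) :
    (0 < z.im → 0 < w.im →
      Nonempty
        ((LinearMap.ker (T.adjoint.toFun - z • T.adjoint.domain.subtype)) ≃ₗ[ℂ]
         (LinearMap.ker (T.adjoint.toFun - w • T.adjoint.domain.subtype)))) ∧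
    (z.im < 0 → w.im < 0 →
      Nonempty
        ((LinearMap.ker (T.adjoint.toFun - z • T.adjoint.domain.subtype)) ≃ₗ[ℂ]
         (LinearMap.ker (T.adjoint.toFun - w • T.adjoint.domain.subtype)))) := by
  exact ⟨fun hz hw => DeficiencySpaces.nonempty_equiv hsym hdense (mul_pos hz hw),
    fun hz hw => DeficiencySpaces.nonempty_equiv hsym hdense (mul_pos_of_neg_of_neg hz hw)⟩
end

section
/- Let K be a finite-dimensional complex inner product space and define the sesquilinear boundary form Σ on K ⊕ K by Σ((φ, φ̇), (ψ, ψ̇)) = ⟨φ̇, ψ⟩ − ⟨φ, ψ̇⟩. A subspace W ⊆ K ⊕ K is maximally isotropic for Σ (i.e., Σ vanishes identically on W × W and W is not properly contained in any other subspace with this property) if and only if there exists a unitary operator U on K such that W = {(φ, φ̇) ∈ K ⊕ K : φ − i φ̇ = U(φ + i φ̇)}. -/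
/-!
Write `a± = φ ± i φ̇` and `b± = ψ ± i ψ̇`. Then
`⟨a₊, b₊⟩ - ⟨a₋, b₋⟩ = -2i Σ((φ, φ̇), (ψ, ψ̇))` (`inner_plus_sub_inner_minus`), so a subspace `W` is
isotropic exactly when `a₊ ↦ a₋` preserves inner products on `W`. Since `(a₊, a₋)` determines
`(φ, φ̇)`, an isotropic `W` is then the graph of an isometry defined on `{a₊ : a ∈ W} ⊆ K`. In finite
dimension such an isometry extends to a unitary `U` of `K` (`LinearIsometry.extend`), so every
isotropic subspace lies in the Cayley graph of some unitary (`exists_le_cayleyGraph`). Cayley graphs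
of unitaries are themselves isotropic, which settles one direction. Conversely, the
Cayley graph of `U` is maximal: it contains vectors with arbitrary `a₊`, so any vector of an
isotropic extension differs from one in the graph by a vector with `a₊ = 0`, hence `a₋ = 0`.
-/

section Cayley

variable {K : Type*} [NormedAddCommGroup K] [InnerProductSpace ℂ K]

/-- The map `(φ, φ̇) ↦ φ + i φ̇`: up to the factor `√2`, the second component of the Cayley
transform. -/
def cayleyPlus : K × K →ₗ[ℂ] K :=
  LinearMap.fst ℂ K K + Complex.I • LinearMap.snd ℂ K K

/-- The map `(φ, φ̇) ↦ φ - i φ̇`: up to the factor `√2`, the first component of the Cayley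
transform. -/
def cayleyMinus : K × K →ₗ[ℂ] K :=
  LinearMap.fst ℂ K K - Complex.I • LinearMap.snd ℂ K K

lemma cayleyPlus_apply (p : K × K) : cayleyPlus p = p.1 + Complex.I • p.2 := rfl

lemma cayleyMinus_apply (p : K × K) : cayleyMinus p = p.1 - Complex.I • p.2 := rfl

/-- The subspace `{(φ, φ̇) : φ - i φ̇ = U (φ + i φ̇)}`. -/
def cayleyGraph (U : K ≃ₗᵢ[ℂ] K) : Submodule ℂ (K × K) :=
  LinearMap.eqLocus cayleyMinus (U.toLinearEquiv.toLinearMap ∘ₗ cayleyPlus)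

lemma mem_cayleyGraph (U : K ≃ₗᵢ[ℂ] K) (p : K × K) :
    p ∈ cayleyGraph U ↔ cayleyMinus p = U (cayleyPlus p) := Iff.rfl

open scoped ComplexInnerProductSpace in
lemma inner_plus_sub_inner_minus (p q : K × K) :
    ⟪cayleyPlus p, cayleyPlus q⟫ - ⟪cayleyMinus p, cayleyMinus q⟫ =
      -(2 * Complex.I) * (⟪p.2, q.1⟫ - ⟪p.1, q.2⟫) := by
  simp only [cayleyPlus_apply, cayleyMinus_apply, inner_add_left, inner_add_right, inner_sub_left,
    inner_sub_right, inner_smul_left, inner_smul_right, Complex.conj_I]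
  ring

open scoped ComplexInnerProductSpace in
lemma sigma_eq_zero_iff (p q : K × K) :
    ⟪p.2, q.1⟫ - ⟪p.1, q.2⟫ = (0 : ℂ) ↔
      ⟪cayleyPlus p, cayleyPlus q⟫ = ⟪cayleyMinus p, cayleyMinus q⟫ := by
  rw [← sub_eq_zero (a := ⟪cayleyPlus p, cayleyPlus q⟫), inner_plus_sub_inner_minus]
  simp

open scoped ComplexInnerProductSpace in
lemma norm_cayleyMinus_eq {p : K × K} (h : ⟪p.2, p.1⟫ - ⟪p.1, p.2⟫ = (0 : ℂ)) :
    ‖cayleyMinus p‖ = ‖cayleyPlus p‖ := by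
  rw [sigma_eq_zero_iff] at h
  rw [@norm_eq_sqrt_re_inner ℂ, @norm_eq_sqrt_re_inner ℂ, h]

/-- The Cayley transform is onto. -/
lemma exists_cayleyPlus_cayleyMinus (u v : K) :
    ∃ p : K × K, cayleyPlus p = u ∧ cayleyMinus p = v := by
  refine ⟨((1 / 2 : ℂ) • (u + v), (-Complex.I / 2) • (u - v)), ?_, ?_⟩ <;>
  · simp only [cayleyPlus_apply, cayleyMinus_apply, smul_smul]
    have : Complex.I * (-Complex.I / 2) = 1 / 2 := by
      linear_combination (-1 / 2 : ℂ) * Complex.I_mul_I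
    rw [this]
    module

/-- The Cayley transform is injective. -/
lemma eq_zero_of_cayley {p : K × K} (hp : cayleyPlus p = 0) (hm : cayleyMinus p = 0) :
    p = 0 := by
  rw [cayleyPlus_apply] at hp
  rw [cayleyMinus_apply] at hm
  have h1 : (2 : ℂ) • p.1 = 0 := by
    linear_combination (norm := module) hp + hm
  have h2 : (2 * Complex.I) • p.2 = 0 := by
    linear_combination (norm := module) hp - hm
  ext
  · simpa using h1
  · simpa using h2

open scoped ComplexInnerProductSpace in
lemma cayleyGraph_isotropic (U : K ≃ₗᵢ[ℂ] K) :
    ∀ w ∈ cayleyGraph U, ∀ w' ∈ cayleyGraph U, ⟪w.2, w'.1⟫ - ⟪w.1, w'.2⟫ = (0 : ℂ) := by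
  intro w hw w' hw'
  rw [mem_cayleyGraph] at hw hw'
  rw [sigma_eq_zero_iff, hw, hw', U.inner_map_map]

open scoped ComplexInnerProductSpace in
lemma le_cayleyGraph_of_isotropic (U : K ≃ₗᵢ[ℂ] K) (W' : Submodule ℂ (K × K))
    (hW' : ∀ w ∈ W', ∀ w' ∈ W', ⟪w.2, w'.1⟫ - ⟪w.1, w'.2⟫ = (0 : ℂ))
    (hle : cayleyGraph U ≤ W') : W' ≤ cayleyGraph U := by
  intro w hw
  obtain ⟨p, hp, hm⟩ := exists_cayleyPlus_cayleyMinus (cayleyPlus w) (U (cayleyPlus w))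
  have hpG : p ∈ cayleyGraph U := by rw [mem_cayleyGraph, hp, hm]
  have hd := W'.sub_mem hw (hle hpG)
  have hn := norm_cayleyMinus_eq (hW' _ hd _ hd)
  rw [map_sub, map_sub, hp, hm, sub_self, norm_zero, norm_eq_zero, sub_eq_zero] at hn
  exact hn

open scoped ComplexInnerProductSpace in
lemma exists_le_cayleyGraph [FiniteDimensional ℂ K] (W : Submodule ℂ (K × K))
    (hW : ∀ w ∈ W, ∀ w' ∈ W, ⟪w.2, w'.1⟫ - ⟪w.1, w'.2⟫ = (0 : ℂ)) :
    ∃ U : K ≃ₗᵢ[ℂ] K, W ≤ cayleyGraph U := by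
  have hnorm : ∀ w ∈ W, ‖cayleyMinus w‖ = ‖cayleyPlus w‖ := fun w hw =>
    norm_cayleyMinus_eq (hW w hw w hw)
  have hinj : Function.Injective (cayleyPlus.domRestrict W) := by
    rw [injective_iff_map_eq_zero]
    rintro ⟨w, hw⟩ (h : cayleyPlus w = 0)
    have hm : cayleyMinus w = 0 := by rw [← norm_eq_zero, hnorm w hw, h, norm_zero]
    exact Subtype.ext (eq_zero_of_cayley h hm)
  let e := LinearEquiv.ofInjective _ hinj
  -- the isometry `a₊ ↦ a₋`, defined on the image of `W` under `cayleyPlus`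
  let L : LinearMap.range (cayleyPlus.domRestrict W) →ₗᵢ[ℂ] K :=
    { toLinearMap := cayleyMinus.domRestrict W ∘ₗ e.symm.toLinearMap
      norm_map' := by
        intro x
        obtain ⟨w, rfl⟩ := e.surjective x
        change ‖cayleyMinus.domRestrict W (e.symm (e w))‖ = ‖cayleyPlus (w : K × K)‖
        rw [e.symm_apply_apply]
        exact hnorm w w.2 }
  refine ⟨L.extend.toLinearIsometryEquiv rfl, fun w hw => ?_⟩
  have h1 : L.extend (cayleyPlus w) = L (e ⟨w, hw⟩) := L.extend_apply (e ⟨w, hw⟩)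
  have h2 : L (e ⟨w, hw⟩) = cayleyMinus w := by
    change cayleyMinus.domRestrict W (e.symm (e ⟨w, hw⟩)) = _
    rw [e.symm_apply_apply]
    rfl
  exact (h1.trans h2).symm

end Cayley

open scoped ComplexInnerProductSpace in
/-- For the sesquilinear boundary form
`Σ((φ,φ̇),(ψ,ψ̇)) = ⟨φ̇,ψ⟩ - ⟨φ,ψ̇⟩` on `K ⊕ K` (with `K` a finite-dimensional complex
inner product space), a subspace `W` is maximally isotropic iff it is the Cayley-type
graph `{(φ,φ̇) : φ - i φ̇ = U (φ + i φ̇)}` of some unitary `U` on `K`. -/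
theorem maximally_isotropic_iff_cayley_graph
    {K : Type*} [NormedAddCommGroup K] [InnerProductSpace ℂ K] [FiniteDimensional ℂ K]
    (W : Submodule ℂ (K × K)) :
    ((∀ w ∈ W, ∀ w' ∈ W, ⟪w.2, w'.1⟫ - ⟪w.1, w'.2⟫ = (0 : ℂ)) ∧
      ∀ W' : Submodule ℂ (K × K),
        (∀ w ∈ W', ∀ w' ∈ W', ⟪w.2, w'.1⟫ - ⟪w.1, w'.2⟫ = (0 : ℂ)) → W ≤ W' → W' = W) ↔
    ∃ U : K ≃ₗᵢ[ℂ] K,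
      (W : Set (K × K)) =
        {p : K × K | p.1 - Complex.I • p.2 = U (p.1 + Complex.I • p.2)} := by
  have hset : ∀ U : K ≃ₗᵢ[ℂ] K,
      (W : Set (K × K)) = {p : K × K | p.1 - Complex.I • p.2 = U (p.1 + Complex.I • p.2)} ↔
        W = cayleyGraph U := fun U => SetLike.coe_set_eq (p := W) (q := cayleyGraph U)
  simp only [hset]
  constructor
  · rintro ⟨hiso, hmax⟩
    obtain ⟨U, hU⟩ := exists_le_cayleyGraph W hiso
    exact ⟨U, (hmax _ (cayleyGraph_isotropic U) hU).symm⟩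
  · rintro ⟨U, rfl⟩
    exact ⟨cayleyGraph_isotropic U, fun W' hW' hle =>
      le_antisymm (le_cayleyGraph_of_isotropic U W' hW' hle) hle⟩
end

section
/- Fix real numbers λ₁ > λ₂ and c₁ > 0, c₂ > 0. The following are equivalent: (i) there exists a real number E < λ₂ such that for each a = 1, 2 there is a function f_a : ℝ → ℂ, twice continuously differentiable on [0,∞), not identically zero, square-integrable on (0,∞), satisfying −f_a''(x) + λ_a f_a(x) = E f_a(x) for all x ≥ 0 and f_a'(0) = −c_a f_a(0); (ii) the compatibility condition c₁² − c₂² = λ₁ − λ₂ holds. Moreover, in that case the eigenvalue is E = λ₁ − c₁² = λ₂ − c₂². -/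
/-!
Write `k = √(lam - E) > 0`. A solution of `f'' = k² f` factors through the first-order combinations
`f' + k f` and `f' - k f`, which are constant multiples of `exp (k x)` and `exp (-k x)`
(`eq_mul_exp_of_deriv`). Since their difference is `2 k f`, square-integrability of `f` forces the
growing mode to vanish, i.e. `f'(0) = -k f(0)`; moreover `f(0) ≠ 0`, as otherwise both modes vanish
and `f = 0`. Comparing with the Robin condition gives `k = c`, so `E = lam - c²`
(`HalfLineRobinEigen.eq_sub_sq`). Conversely `exp (-c x)` is an eigenfunction for `lam - c²` when
`c > 0` (`halfLineRobinEigen_sub_sq`). A common eigenvalue thus exists exactly when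
`lam₁ - c₁² = lam₂ - c₂²`.
-/

open MeasureTheory in
/-- `HalfLineRobinEigen lam c E` says that the shifted half-line problem
`-f'' + lam f = E f` with Robin boundary condition `f'(0) = -c f(0)` has a nonzero,
square-integrable, twice continuously differentiable solution on `[0,∞)`. -/
def HalfLineRobinEigen (lam c E : ℝ) : Prop :=
  ∃ f f' f'' : ℝ → ℂ,
    (∀ x ∈ Set.Ici (0:ℝ), HasDerivWithinAt f (f' x) (Set.Ici (0:ℝ)) x) ∧
    (∀ x ∈ Set.Ici (0:ℝ), HasDerivWithinAt f' (f'' x) (Set.Ici (0:ℝ)) x) ∧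
    ContinuousOn f'' (Set.Ici (0:ℝ)) ∧
    (¬ ∀ x ∈ Set.Ici (0:ℝ), f x = 0) ∧
    IntegrableOn (fun x => ‖f x‖ ^ 2) (Set.Ioi (0:ℝ)) ∧
    (∀ x ∈ Set.Ici (0:ℝ), -f'' x + (lam : ℂ) * f x = (E : ℂ) * f x) ∧
    f' 0 = -(c : ℂ) * f 0

open MeasureTheory Set

lemma eq_mul_exp_of_deriv (u : ℝ → ℂ) (r : ℝ)
    (hu : ∀ x ∈ Ici (0:ℝ), HasDerivWithinAt u ((r : ℂ) * u x) (Ici (0:ℝ)) x) :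
    ∀ x ∈ Ici (0:ℝ), u x = u 0 * (Real.exp (r * x) : ℂ) := by
  have hE : ∀ x : ℝ, HasDerivAt (fun x : ℝ => (Real.exp (-(r * x)) : ℂ))
      ((Real.exp (-(r * x)) * (-(r * 1)) : ℝ) : ℂ) x := fun x =>
    (((hasDerivAt_id x).const_mul r).neg.exp).ofReal_comp
  have hd : ∀ x ∈ Ici (0:ℝ),
      HasDerivWithinAt (fun x => u x * (Real.exp (-(r * x)) : ℂ)) 0 (Ici (0:ℝ)) x := by
    intro x hx
    refine ((hu x hx).mul (hE x).hasDerivWithinAt).congr_deriv ?_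
    push_cast
    ring
  intro x hx
  have hconst := constant_of_has_deriv_right_zero (a := 0) (b := x)
    (fun y hy => ((hd y hy.1).continuousWithinAt).mono Icc_subset_Ici_self)
    (fun y hy => (hd y hy.1).mono (Ici_subset_Ici.2 hy.1)) x ⟨hx, le_rfl⟩
  have h1 : (Real.exp (-(r * x)) : ℂ) * (Real.exp (r * x) : ℂ) = 1 := by
    rw [← Complex.ofReal_mul, ← Real.exp_add]
    simp
  simp only [mul_zero, neg_zero, Real.exp_zero, Complex.ofReal_one, mul_one] at hconst
  rw [← hconst, mul_assoc, h1, mul_one]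

/-- A combination `a exp (k x) + b exp (-k x)` with `k > 0` is square-integrable on the half-line
only if its growing mode is absent. -/
lemma coeff_eq_zero_of_integrableOn (f : ℝ → ℂ) (a b : ℂ) (k : ℝ) (hk : 0 < k)
    (hf : ∀ x ∈ Ioi (0:ℝ), f x = a * (Real.exp (k * x) : ℂ) + b * (Real.exp (-k * x) : ℂ))
    (hint : IntegrableOn (fun x => ‖f x‖ ^ 2) (Ioi (0:ℝ))) : a = 0 := by
  have hexp : IntegrableOn (fun x : ℝ => Real.exp (-(2 * k) * x)) (Ioi (0:ℝ)) :=
    exp_neg_integrableOn_Ioi 0 (by positivity)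
  have hdom : IntegrableOn (fun x => 2 * ‖f x‖ ^ 2 + 2 * ‖b‖ ^ 2 * Real.exp (-(2 * k) * x))
      (Ioi (0:ℝ)) := (hint.const_mul 2).add (hexp.const_mul _)
  -- The constant `‖a‖²` is dominated by an integrable function on a set of infinite measure.
  have hc : IntegrableOn (fun _ : ℝ => ‖a‖ ^ 2) (Ioi (0:ℝ)) := by
    refine Integrable.mono' hdom aestronglyMeasurable_const ?_
    filter_upwards [ae_restrict_mem measurableSet_Ioi] with x hx
    have hx0 : (0:ℝ) < x := hx
    have hge : 1 ≤ Real.exp (k * x) := Real.one_le_exp (by positivity)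
    have htri : ‖a‖ * Real.exp (k * x) ≤ ‖f x‖ + ‖b‖ * Real.exp (-k * x) := by
      have h := norm_sub_le (f x) (b * (Real.exp (-k * x) : ℂ))
      rw [hf x hx, add_sub_cancel_right, ← hf x hx, norm_mul, norm_mul, Complex.norm_real,
        Complex.norm_real, Real.norm_of_nonneg (Real.exp_pos _).le,
        Real.norm_of_nonneg (Real.exp_pos _).le] at h
      exact h
    have hle : ‖a‖ ≤ ‖f x‖ + ‖b‖ * Real.exp (-k * x) :=
      (le_mul_of_one_le_right (norm_nonneg a) hge).trans htri
    have hsq : Real.exp (-(2 * k) * x) = Real.exp (-k * x) ^ 2 := by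
      rw [← Real.exp_nat_mul]
      congr 1
      push_cast
      ring
    rw [Real.norm_of_nonneg (by positivity), hsq]
    have h2 := pow_le_pow_left₀ (norm_nonneg a) hle 2
    nlinarith [sq_nonneg (‖f x‖ - ‖b‖ * Real.exp (-k * x))]
  rw [integrableOn_const_iff] at hc
  simpa using hc

lemma HalfLineRobinEigen.eq_sub_sq {lam c E : ℝ} (hE : E < lam)
    (h : HalfLineRobinEigen lam c E) : 0 < c ∧ E = lam - c ^ 2 := by
  obtain ⟨f, f', f'', hf, hf', -, hne, hint, hode, hbc⟩ := h
  obtain ⟨k, hk, hk2⟩ : ∃ k : ℝ, 0 < k ∧ k ^ 2 = lam - E :=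
    ⟨√(lam - E), Real.sqrt_pos.2 (by linarith), Real.sq_sqrt (by linarith)⟩
  have hkC : (k : ℂ) ≠ 0 := by exact_mod_cast hk.ne'
  have hk2C : (k : ℂ) ^ 2 = lam - E := by exact_mod_cast hk2
  have hf2 : ∀ x ∈ Ici (0:ℝ), f'' x = (k : ℂ) ^ 2 * f x := by
    intro x hx
    rw [hk2C]
    linear_combination -hode x hx
  have hp := eq_mul_exp_of_deriv (fun x => f' x + (k : ℂ) * f x) k (fun x hx => by
    refine ((hf' x hx).add ((hf x hx).const_mul (k : ℂ))).congr_deriv ?_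
    rw [hf2 x hx]
    ring)
  have hm := eq_mul_exp_of_deriv (fun x => f' x - (k : ℂ) * f x) (-k) (fun x hx => by
    refine ((hf' x hx).sub ((hf x hx).const_mul (k : ℂ))).congr_deriv ?_
    rw [hf2 x hx]
    push_cast
    ring)
  have hform : ∀ x ∈ Ici (0:ℝ), f x = (f' 0 + k * f 0) / (2 * k) * (Real.exp (k * x) : ℂ) +
      -(f' 0 - k * f 0) / (2 * k) * (Real.exp (-k * x) : ℂ) := by
    intro x hx
    have h1 := hp x hx
    have h2 := hm x hx
    rw [neg_mul k x] at h2 ⊢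
    field_simp
    linear_combination h1 - h2
  have ha := coeff_eq_zero_of_integrableOn f _ _ k hk
    (fun x hx => hform x (Ioi_subset_Ici_self hx)) hint
  have ha' : f' 0 + k * f 0 = 0 := by
    rcases div_eq_zero_iff.1 ha with h | h
    · exact h
    · exact absurd h (mul_ne_zero two_ne_zero hkC)
  have hf0 : f 0 ≠ 0 := by
    intro h0
    apply hne
    intro x hx
    rw [hform x hx, hbc, h0]
    simp
  have hkc : k = c := by
    have h : ((k : ℂ) - c) * f 0 = 0 := by
      rw [hbc] at ha'
      linear_combination ha'
    have h' := (mul_eq_zero.1 h).resolve_right hf0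
    exact_mod_cast sub_eq_zero.1 h'
  subst hkc
  exact ⟨hk, by linarith⟩

lemma halfLineRobinEigen_sub_sq (lam c : ℝ) (hc : 0 < c) :
    HalfLineRobinEigen lam c (lam - c ^ 2) := by
  have hd : ∀ (z : ℂ) (x : ℝ), HasDerivAt (fun x : ℝ => z * (Real.exp (-c * x) : ℂ))
      (z * (-c) * (Real.exp (-c * x) : ℂ)) x := by
    intro z x
    refine ((((hasDerivAt_id x).const_mul (-c)).exp.ofReal_comp).const_mul z).congr_deriv ?_
    simp only [id]
    push_cast
    ring
  refine ⟨fun x => 1 * (Real.exp (-c * x) : ℂ), fun x => 1 * (-c) * (Real.exp (-c * x) : ℂ),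
    fun x => 1 * (-c) * (-c) * (Real.exp (-c * x) : ℂ),
    fun x _ => (hd _ x).hasDerivWithinAt, fun x _ => (hd _ x).hasDerivWithinAt,
    fun x _ => (hd _ x).continuousAt.continuousWithinAt, ?_, ?_, ?_, ?_⟩
  · intro h
    have := h 0 self_mem_Ici
    simp at this
  · have hexp : IntegrableOn (fun x : ℝ => Real.exp (-(2 * c) * x)) (Ioi (0:ℝ)) :=
      exp_neg_integrableOn_Ioi 0 (by positivity)
    refine hexp.congr_fun (fun x _ => ?_) measurableSet_Ioi
    simp only [one_mul]
    rw [Complex.norm_real, Real.norm_of_nonneg (Real.exp_pos _).le, ← Real.exp_nat_mul]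
    congr 1
    push_cast
    ring
  · intro x _
    push_cast
    ring
  · simp

/-- For the half-line/half-spin system with levels `lam₁ > lam₂` and Robin
parameters `c₁, c₂ > 0`, a common point eigenvalue `E < lam₂` for both spin components
exists iff the compatibility condition `c₁² - c₂² = lam₁ - lam₂` holds, and then
`E = lam₁ - c₁² = lam₂ - c₂²`. -/
theorem half_line_half_spin_compatibility (lam₁ lam₂ c₁ c₂ : ℝ)
    (hlam : lam₂ < lam₁) (hc₁ : 0 < c₁) (hc₂ : 0 < c₂) :
    ((∃ E : ℝ, E < lam₂ ∧ HalfLineRobinEigen lam₁ c₁ E ∧ HalfLineRobinEigen lam₂ c₂ E) ↔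
      c₁ ^ 2 - c₂ ^ 2 = lam₁ - lam₂) ∧
    (∀ E : ℝ, E < lam₂ → HalfLineRobinEigen lam₁ c₁ E → HalfLineRobinEigen lam₂ c₂ E →
      E = lam₁ - c₁ ^ 2 ∧ E = lam₂ - c₂ ^ 2) := by
  constructor
  · constructor
    · rintro ⟨E, hE, h₁, h₂⟩
      have e₁ := (h₁.eq_sub_sq (hE.trans hlam)).2
      have e₂ := (h₂.eq_sub_sq hE).2
      linarith
    · intro h
      have e : lam₁ - c₁ ^ 2 = lam₂ - c₂ ^ 2 := by linarith
      refine ⟨lam₁ - c₁ ^ 2, ?_, halfLineRobinEigen_sub_sq lam₁ c₁ hc₁, ?_⟩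
      · rw [e]
        linarith [pow_pos hc₂ 2]
      · rw [e]
        exact halfLineRobinEigen_sub_sq lam₂ c₂ hc₂
  · intro E hE h₁ h₂
    exact ⟨(h₁.eq_sub_sq (hE.trans hlam)).2, (h₂.eq_sub_sq hE).2⟩
end

section
/- Fix real numbers μ, δ, E. For β ∈ ℝ, say that E is a β-eigenvalue if there exist functions f, g : ℝ → ℂ, twice continuously differentiable on [0,1] and not both identically zero, satisfying −f''(x) + μ f(x) = E f(x) and −g''(x) − μ g(x) = E g(x) for all x ∈ [0,1], together with the four boundary conditions: f(0) + i f'(0) = e^{i(β+δ)}(g(1) + i g'(1)); f(1) − i f'(1) = e^{i(β−δ)}(g(0) − i g'(0)); g(0) + i g'(0) = e^{i(−β+δ)}(f(1) + i f'(1)); g(1) − i g'(1) = e^{i(−β−δ)}(f(0) − i f'(0)). Then for any β, β' ∈ ℝ, E is a β-eigenvalue if and only if E is a β'-eigenvalue; that is, the point spectrum of the planar rotor-spin system with anti-diagonal boundary unitary is independent of the parameter β. -/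
/-!
The two spin components are coupled only through the boundary conditions, since the Hamiltonian
is diagonal in the spin. The constant diagonal gauge transformation
`(f, g) ↦ (e^{i(β' - β)} f, g)` is invertible, preserves the differential equations, and replaces
`β` by `β'` in the boundary conditions, so the eigenspaces for `β` and `β'` are isomorphic.
-/

/-- `IsRotorSpinEigenvalue μ δ β E` says that `E` is a point eigenvalue of the planar
rotor-spin system with magnetic coupling `μ`, quasi-periodicity parameter `δ` and
anti-diagonal boundary unitary with parameter `β`: there exist spin components
`f = Φ↑` and `g = Φ↓`, twice continuously differentiable on `[0,1]` and not both
identically zero, solving `-f'' + μ f = E f`, `-g'' - μ g = E g`, and satisfying the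
four boundary conditions coupling the two components. -/
def IsRotorSpinEigenvalue (μ δ β E : ℝ) : Prop :=
  ∃ f f' f'' g g' g'' : ℝ → ℂ,
    (∀ x ∈ Set.Icc (0:ℝ) 1, HasDerivWithinAt f (f' x) (Set.Icc (0:ℝ) 1) x) ∧
    (∀ x ∈ Set.Icc (0:ℝ) 1, HasDerivWithinAt f' (f'' x) (Set.Icc (0:ℝ) 1) x) ∧
    ContinuousOn f'' (Set.Icc (0:ℝ) 1) ∧
    (∀ x ∈ Set.Icc (0:ℝ) 1, HasDerivWithinAt g (g' x) (Set.Icc (0:ℝ) 1) x) ∧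
    (∀ x ∈ Set.Icc (0:ℝ) 1, HasDerivWithinAt g' (g'' x) (Set.Icc (0:ℝ) 1) x) ∧
    ContinuousOn g'' (Set.Icc (0:ℝ) 1) ∧
    ¬ ((∀ x ∈ Set.Icc (0:ℝ) 1, f x = 0) ∧ (∀ x ∈ Set.Icc (0:ℝ) 1, g x = 0)) ∧
    (∀ x ∈ Set.Icc (0:ℝ) 1, -f'' x + (μ : ℂ) * f x = (E : ℂ) * f x) ∧
    (∀ x ∈ Set.Icc (0:ℝ) 1, -g'' x - (μ : ℂ) * g x = (E : ℂ) * g x) ∧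
    f 0 + Complex.I * f' 0 = Complex.exp (Complex.I * (β + δ)) * (g 1 + Complex.I * g' 1) ∧
    f 1 - Complex.I * f' 1 = Complex.exp (Complex.I * (β - δ)) * (g 0 - Complex.I * g' 0) ∧
    g 0 + Complex.I * g' 0 = Complex.exp (Complex.I * (-β + δ)) * (f 1 + Complex.I * f' 1) ∧
    g 1 - Complex.I * g' 1 = Complex.exp (Complex.I * (-β - δ)) * (f 0 - Complex.I * f' 0)

/-- Multiplying the spin-up component by the phase `e^{i(β' - β)}` carries `β`-eigenfunctions to
`β'`-eigenfunctions. -/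
lemma IsRotorSpinEigenvalue.change_phase {μ δ E β : ℝ} (β' : ℝ)
    (h : IsRotorSpinEigenvalue μ δ β E) : IsRotorSpinEigenvalue μ δ β' E := by
  obtain ⟨f, f', f'', g, g', g'', hf, hf', hf'', hg, hg', hg'', hne, ef, eg, b1, b2, b3, b4⟩ := h
  set c : ℂ := Complex.exp (Complex.I * (β' - β)) with hc
  have hc0 : c ≠ 0 := Complex.exp_ne_zero _
  have e1 : Complex.exp (Complex.I * (β' + δ)) = c * Complex.exp (Complex.I * (β + δ)) := by
    rw [hc, ← Complex.exp_add]; congr 1; ring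
  have e2 : Complex.exp (Complex.I * (β' - δ)) = c * Complex.exp (Complex.I * (β - δ)) := by
    rw [hc, ← Complex.exp_add]; congr 1; ring
  have e3 : Complex.exp (Complex.I * (-β + δ)) = Complex.exp (Complex.I * (-β' + δ)) * c := by
    rw [hc, ← Complex.exp_add]; congr 1; ring
  have e4 : Complex.exp (Complex.I * (-β - δ)) = Complex.exp (Complex.I * (-β' - δ)) * c := by
    rw [hc, ← Complex.exp_add]; congr 1; ring
  refine ⟨fun x => c * f x, fun x => c * f' x, fun x => c * f'' x, g, g', g'',
    fun x hx => (hf x hx).const_mul c, fun x hx => (hf' x hx).const_mul c,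
    continuousOn_const.mul hf'', hg, hg', hg'', ?_, ?_, eg, ?_, ?_, ?_, ?_⟩
  · rintro ⟨h1, h2⟩
    exact hne ⟨fun x hx => (mul_eq_zero.mp (h1 x hx)).resolve_left hc0, h2⟩
  · intro x hx
    linear_combination c * ef x hx
  · rw [e1]
    linear_combination c * b1
  · rw [e2]
    linear_combination c * b2
  · rw [e3] at b3
    linear_combination b3
  · rw [e4] at b4
    linear_combination b4

/-- The point spectrum of the planar rotor-spin system with anti-diagonal
boundary unitary does not depend on the parameter `β`: `E` is a `β`-eigenvalue iff it is
a `β'`-eigenvalue. -/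
theorem rotor_spin_spectrum_independent_of_beta (μ δ E : ℝ) (β β' : ℝ) :
    IsRotorSpinEigenvalue μ δ β E ↔ IsRotorSpinEigenvalue μ δ β' E := by
  exact ⟨fun h => h.change_phase β', fun h => h.change_phase β⟩
end
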